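/- Let r > 0 and let v be a harmonic field on an open neighborhood of the closed ball B̄_r ⊆ ℝ³. Then ∫_{B_r} |v|² dx ≤ r·∫_{∂B_r} |v|² dσ. -/

import Mathlib

open MeasureTheory Metric
open scoped RealInnerProductSpace

noncomputable section

abbrev E3 := EuclideanSpace ℝ (Fin 3)

/-- A harmonic field on an open set `Ω ⊆ ℝ³`: a smooth map whose total derivative is at
every point of `Ω` a symmetric, trace-free endomorphism of `ℝ³`. -/
def IsHarmonicField (Ω : Set E3) (v : E3 → E3) : Prop :=
  ContDiffOn ℝ (⊤ : ℕ∞) v Ω ∧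
    ∀ x ∈ Ω,
      (∀ u w : E3, ⟪fderiv ℝ v x u, w⟫ = ⟪fderiv ℝ v x w, u⟫) ∧
      LinearMap.trace ℝ E3 (fderiv ℝ v x).toLinearMap = 0

lemma polar_int (g : E3 → ℝ) (hg : Integrable g) :
    ∫ x, g x = ∫ ω, (∫ t in Set.Ioi (0:ℝ), t ^ 2 * g (t • (ω : E3))) ∂((volume : Measure E3).toSphere) := by
  have hfr : Module.finrank ℝ E3 = 3 := by simp
  have hmp := (volume : Measure E3).measurePreserving_homeomorphUnitSphereProd
  set G : (Metric.sphere (0:E3) 1) × (Set.Ioi (0:ℝ)) → ℝ := fun p => g (p.2.1 • (p.1 : E3)) with hG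
  have hGc : ∀ x : ({0}ᶜ : Set E3), G (homeomorphUnitSphereProd E3 x) = g x := by
    intro x
    have : (x : E3) ≠ 0 := x.2
    simp [hG, smul_smul, this]
  have h1 : ∫ x, g x = ∫ x : ({0}ᶜ : Set E3), g x ∂(volume.comap (Subtype.val : ({0}ᶜ : Set E3) → E3)) := by
    rw [integral_subtype_comap (measurableSet_singleton _).compl fun x ↦ g x,
        restrict_compl_singleton]
  have hint : Integrable G ((volume : Measure E3).toSphere.prod (Measure.volumeIoiPow (Module.finrank ℝ E3 - 1))) := by
    rw [← hmp.integrable_comp_emb (Homeomorph.measurableEmbedding _)]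
    have : G ∘ (homeomorphUnitSphereProd E3) = g ∘ Subtype.val := by
      funext x; exact hGc x
    rw [this, ← integrableOn_iff_comap_subtypeVal (measurableSet_singleton _).compl]
    exact hg.integrableOn
  have h2 : ∫ x : ({0}ᶜ : Set E3), g x ∂(volume.comap (Subtype.val : ({0}ᶜ : Set E3) → E3)) = ∫ p, G p ∂((volume : Measure E3).toSphere.prod (Measure.volumeIoiPow (Module.finrank ℝ E3 - 1))) := by
    rw [← hmp.integral_comp (Homeomorph.measurableEmbedding _)]
    simp only [hGc]
  rw [h1, h2, integral_prod _ hint]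
  congr 1
  funext ω
  simp only [hG, hfr, Measure.volumeIoiPow, ENNReal.ofReal]
  rw [integral_withDensity_eq_integral_smul,
        integral_subtype_comap measurableSet_Ioi fun a ↦ Real.toNNReal (a ^ (3-1)) • g (a • (ω : E3)),
        setIntegral_congr_fun measurableSet_Ioi fun x hx ↦ ?_]
  · rw [NNReal.smul_def, Real.coe_toNNReal _ (pow_nonneg (le_of_lt hx) _)]; rfl
  · exact (measurable_subtype_coe.pow_const _).real_toNNReal

lemma polar_ball (r : ℝ) (hr : 0 < r) (g : E3 → ℝ) (hg : IntegrableOn g (Metric.ball 0 r)) :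
    ∫ x in Metric.ball 0 r, g x = ∫ ω, (∫ t in (0:ℝ)..r, t ^ 2 * g (t • (ω : E3))) ∂((volume : Measure E3).toSphere) := by
  rw [← integral_indicator measurableSet_ball, polar_int _ (hg.integrable_indicator measurableSet_ball)]
  congr 1
  funext ω
  have hω : ‖(ω : E3)‖ = 1 := by simp
  rw [intervalIntegral.integral_of_le hr.le, integral_Ioc_eq_integral_Ioo,
    ← integral_indicator measurableSet_Ioi, ← integral_indicator measurableSet_Ioo]
  congr 1
  funext t
  by_cases h0 : 0 < t
  · by_cases h1 : t < r
    · simp [Set.indicator, h0, h1, norm_smul, hω, abs_of_pos h0]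
    · simp [Set.indicator, h0, h1, norm_smul, hω, abs_of_pos h0]
  · simp [Set.indicator, h0]

/-- the projection to the sphere -/
def prj (r : ℝ) (x : E3) : E3 := (r / ‖x‖) • x

lemma prj_meas (r : ℝ) : Measurable (prj r) := by
  unfold prj
  fun_prop

lemma ball_prj (r : ℝ) (hr : 0 < r) (F : E3 → ℝ) (hF : ContDiff ℝ 1 F) :
    ∫ x in Metric.ball 0 r, (3 * F x + fderiv ℝ F x x) = ∫ x in Metric.ball 0 r, 3 * F (prj r x) := by
  have hc : Continuous (fun x => 3 * F x + fderiv ℝ F x x) := by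
    have := hF.continuous
    have := hF.continuous_fderiv (by norm_num)
    fun_prop
  rw [polar_ball r hr _ ((hc.continuousOn.integrableOn_compact (isCompact_closedBall 0 r)).mono_set Metric.ball_subset_closedBall), polar_ball r hr _ ?_]
  · congr 1
    funext ω
    have hω : ‖(ω : E3)‖ = 1 := by simp
    have e1 : ∫ t in (0:ℝ)..r, t ^ 2 * (3 * F (t • (ω : E3)) + fderiv ℝ F (t • (ω : E3)) (t • (ω : E3)))
        = r ^ 3 * F (r • (ω : E3)) - 0 ^ 3 * F ((0:ℝ) • (ω : E3)) := by
      apply intervalIntegral.integral_eq_sub_of_hasDerivAt (f := fun t : ℝ => t ^ 3 * F (t • (ω : E3)))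
      · intro t _
        have hd : HasDerivAt (fun t : ℝ => F (t • (ω : E3))) (fderiv ℝ F (t • (ω : E3)) (ω : E3)) t := by
          have h1 : HasDerivAt (fun t : ℝ => t • (ω : E3)) ((1:ℝ) • (ω : E3)) t :=
            (hasDerivAt_id t).smul_const _
          rw [one_smul] at h1
          exact ((hF.differentiable (by norm_num)) _).hasFDerivAt.comp_hasDerivAt t h1
        refine ((hasDerivAt_pow 3 t).mul hd).congr_deriv ?_
        rw [map_smul, smul_eq_mul]
        push_cast
        ring
      · apply Continuous.intervalIntegrable
        have := hc.comp (continuous_id.smul (continuous_const (y := (ω : E3))) : Continuous fun t : ℝ => t • (ω : E3))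
        exact (continuous_pow 2).mul this
    have e2 : ∫ t in (0:ℝ)..r, t ^ 2 * (3 * F (prj r (t • (ω : E3)))) = ∫ t in (0:ℝ)..r, t ^ 2 * (3 * F (r • (ω : E3))) := by
      apply intervalIntegral.integral_congr_ae
      filter_upwards with t ht
      rw [Set.uIoc_of_le hr.le] at ht
      have : prj r (t • (ω : E3)) = r • (ω : E3) := by
        simp only [prj, norm_smul, hω, smul_smul, Real.norm_eq_abs, abs_of_pos ht.1]
        congr 1
        have := ht.1.ne'
        field_simp
      rw [this]
    rw [e1, e2, intervalIntegral.integral_mul_const, integral_pow]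
    norm_num
    ring
  · obtain ⟨C, hC⟩ := (isCompact_closedBall (0:E3) r).exists_bound_of_continuousOn hF.continuous.continuousOn
    apply Measure.integrableOn_of_bounded (M := 3 * C) measure_ball_lt_top.ne
    · exact ((hF.continuous.measurable.comp (prj_meas r)).const_mul 3).aestronglyMeasurable
    · filter_upwards with x
      rw [norm_mul]
      have : ‖F (prj r x)‖ ≤ C := by
        apply hC
        simp only [prj, mem_closedBall_zero_iff, norm_smul, norm_div, norm_norm]
        by_cases hx : ‖x‖ = 0
        · simp [hx, hr.le]
        · rw [div_mul_cancel₀ _ hx, Real.norm_eq_abs, abs_of_pos hr]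
      norm_num
      linarith [this, Real.norm_eq_abs (F (prj r x))]

lemma sphere_fin (r : ℝ) : μH[2] (Metric.sphere (0:E3) r) < ⊤ := by
  set f : (Fin 2 → ℝ) → E3 := fun p => !₂[r * (Real.sin (p 0) * Real.cos (p 1)), r * (Real.sin (p 0) * Real.sin (p 1)), r * Real.cos (p 0)] with hf
  have hfc : ContDiff ℝ 1 f := by
    rw [contDiff_euclidean]
    intro i
    fin_cases i <;> simp [hf] <;> fun_prop
  set K : Set (Fin 2 → ℝ) := Metric.closedBall 0 4 with hK
  have hlip : ∃ C, LipschitzOnWith C f K := by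
    exact hfc.contDiffOn.exists_lipschitzOnWith one_ne_zero (convex_closedBall _ _) (isCompact_closedBall _ _)
  obtain ⟨C, hC⟩ := hlip
  have hsub : Metric.sphere (0:E3) r ⊆ f '' K := by
    intro x hx
    have hx : ‖x‖ = r := by simpa using hx
    have hr : 0 ≤ r := hx ▸ norm_nonneg x
    have hsq : x 0 ^ 2 + x 1 ^ 2 + x 2 ^ 2 = r ^ 2 := by
      rw [← hx, EuclideanSpace.norm_sq_eq]; simp [Fin.sum_univ_three]
    rcases hr.eq_or_lt with h0 | hr
    · refine ⟨0, by simp [hK], ?_⟩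
      have : x = 0 := by rw [← norm_eq_zero, hx, ← h0]
      rw [this]
      ext i
      fin_cases i <;> simp [hf, ← h0]
    set z : ℂ := ⟨x 0, x 1⟩ with hz
    have hb : |x 2 / r| ≤ 1 := by
      rw [abs_div, abs_of_pos hr, div_le_one hr]
      apply abs_le_of_sq_le_sq _ hr.le
      nlinarith [sq_nonneg (x 0), sq_nonneg (x 1)]
    have hzn : ‖z‖ = r * Real.sin (Real.arccos (x 2 / r)) := by
      rw [Real.sin_arccos]
      have : ‖z‖ ^ 2 = r ^ 2 * (1 - (x 2 / r) ^ 2) := by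
        rw [Complex.sq_norm, Complex.normSq_apply]
        field_simp
        simp [hz]
        linarith
      have h1 : 0 ≤ 1 - (x 2 / r) ^ 2 := by
        have := sq_abs (x 2 / r)
        nlinarith [abs_nonneg (x 2 / r)]
      rw [← Real.sqrt_sq (norm_nonneg z), this, Real.sqrt_mul (by positivity), Real.sqrt_sq hr.le]
    refine ⟨![Real.arccos (x 2 / r), z.arg], ?_, ?_⟩
    · rw [hK, mem_closedBall_zero_iff, pi_norm_le_iff_of_nonneg (by norm_num)]
      have := Real.pi_lt_four
      intro i
      fin_cases i
      · simp only [Fin.zero_eta, Matrix.cons_val_zero, Real.norm_eq_abs, abs_of_nonneg (Real.arccos_nonneg _)]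
        linarith [Real.arccos_le_pi (x 2 / r)]
      · simp
        linarith [Complex.abs_arg_le_pi z]
    · ext i
      fin_cases i
      · simp [hf]
        rw [← mul_assoc, ← hzn, Complex.norm_mul_cos_arg]
      · simp [hf]
        rw [← mul_assoc, ← hzn, Complex.norm_mul_sin_arg]
      · simp [hf]
        rw [Real.cos_arccos (abs_le.1 hb).1 (abs_le.1 hb).2]
        field_simp
  refine (measure_mono hsub).trans_lt ((hC.hausdorffMeasure_image_le (by norm_num)).trans_lt ?_)
  have : (μH[2] : Measure (Fin 2 → ℝ)) = volume := by
    have := hausdorffMeasure_pi_real (ι := Fin 2)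
    simpa using this
  rw [this]
  exact ENNReal.mul_lt_top (ENNReal.rpow_lt_top_of_nonneg (by norm_num) ENNReal.coe_ne_top) (isCompact_closedBall _ _).measure_lt_top

lemma vol_le_diam (T : Set E3) : volume T ≤ Metric.ediam T ^ 3 := by
  have h := (EuclideanSpace.volume_preserving_symm_measurableEquiv_toLp (Fin 3)).symm
  have e : volume T = volume ((WithLp.ofLp : E3 → (Fin 3 → ℝ)) '' T) := by
    have := (EuclideanSpace.volume_preserving_symm_measurableEquiv_toLp (Fin 3)).measure_preimage_equiv
      ((WithLp.ofLp : E3 → (Fin 3 → ℝ)) '' T)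
    rw [← this]
    congr 1
    ext x
    constructor
    · intro hx; exact ⟨x, hx, rfl⟩
    · rintro ⟨y, hy, hxy⟩
      have : y = x := by
        apply WithLp.ofLp_injective 2
        exact hxy
      exact this ▸ hy
  rw [e]
  refine (Real.volume_pi_le_diam_pow _).trans ?_
  simp only [Fintype.card_fin]
  gcongr
  have := (PiLp.lipschitzWith_ofLp 2 (fun _ : Fin 3 => ℝ)).ediam_image_le T
  simpa using this

open scoped Pointwise in
lemma cone_bound (r : ℝ) (hr : 0 < r) (s : Set E3) (d : ℝ) (hd : 0 < d) (hdr : d ≤ r / 10)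
    (hs : ∀ x ∈ s, ∀ y ∈ s, dist x y ≤ d) :
    volume ({x : E3 | x ≠ 0 ∧ ‖x‖ ≤ r} ∩ prj r ⁻¹' s) ≤ ENNReal.ofReal (r * d ^ 2) := by
  set C : Set E3 := {x : E3 | x ≠ 0 ∧ ‖x‖ ≤ r} ∩ prj r ⁻¹' s with hC
  set ε : ℝ := 3 * d / (4 * r) with hε
  have hε0 : 0 < ε := by positivity
  have hεr : ε * r = 3 / 4 * d := by rw [hε]; field_simp
  have hε1 : ε ≤ 19 / 144 := by
    rw [hε, div_le_iff₀ (by positivity)]; nlinarith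
  have hfin : volume C < ⊤ := by
    refine (measure_mono (?_ : C ⊆ Metric.closedBall 0 r)).trans_lt (isCompact_closedBall _ _).measure_lt_top
    intro x hx; simpa using hx.1.2
  set T : Set E3 := C ∩ {x | (1 - ε) * r < ‖x‖} with hT
  have hcov : C ⊆ T ∪ (1 - ε) • C := by
    intro x hx
    by_cases h : (1 - ε) * r < ‖x‖
    · exact Or.inl ⟨hx, h⟩
    · right
      have h1 : 0 < 1 - ε := by linarith
      rw [Set.mem_smul_set_iff_inv_smul_mem₀ h1.ne']
      refine ⟨⟨?_, ?_⟩, ?_⟩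
      · exact smul_ne_zero (inv_ne_zero h1.ne') hx.1.1
      · rw [norm_smul, norm_inv, Real.norm_eq_abs, abs_of_pos h1, inv_mul_le_iff₀ h1]
        exact not_lt.1 h
      · have : prj r ((1 - ε)⁻¹ • x) = prj r x := by
          have hx0 : ‖x‖ ≠ 0 := norm_ne_zero_iff.2 hx.1.1
          simp only [prj, norm_smul, norm_inv, Real.norm_eq_abs, abs_of_pos h1, smul_smul]
          congr 1
          field_simp
        rw [Set.mem_preimage, this]; exact hx.2
  have hdiam : Metric.ediam T ≤ ENNReal.ofReal (5 / 4 * d) := by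
    apply Metric.ediam_le
    intro x hx y hy
    rw [edist_dist]
    apply ENNReal.ofReal_le_ofReal
    apply le_of_sq_le_sq _ (by positivity)
    have hx0 : 0 < ‖x‖ := norm_pos_iff.2 hx.1.1.1
    have hy0 : 0 < ‖y‖ := norm_pos_iff.2 hy.1.1.1
    have h1 := hs _ hx.1.2 _ hy.1.2
    have hxr : ‖x‖ ≤ r := hx.1.1.2
    have hyr : ‖y‖ ≤ r := hy.1.1.2
    have hx2 : (1 - ε) * r < ‖x‖ := hx.2
    have hy2 : (1 - ε) * r < ‖y‖ := hy.2
    have hp : ‖prj r x - prj r y‖ ^ 2 * (‖x‖ * ‖y‖) = r ^ 2 * (2 * (‖x‖ * ‖y‖) - 2 * ⟪x, y⟫) := by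
      rw [norm_sub_sq_real]
      simp only [prj, inner_smul_left, inner_smul_right, norm_smul, norm_div, Real.norm_eq_abs, abs_of_pos hr, abs_of_pos hx0, abs_of_pos hy0]
      simp only [conj_trivial]
      field_simp
      ring
    have hq : ‖prj r x - prj r y‖ ^ 2 ≤ d ^ 2 := by
      rw [← dist_eq_norm]
      gcongr
    have hxy : ‖x‖ * ‖y‖ ≤ r ^ 2 := by nlinarith
    have h3 : r ^ 2 * (2 * (‖x‖ * ‖y‖) - 2 * ⟪x, y⟫) ≤ r ^ 2 * d ^ 2 := by
      rw [← hp, mul_comm]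
      gcongr
    have h4 : 2 * (‖x‖ * ‖y‖) - 2 * ⟪x, y⟫ ≤ d ^ 2 := le_of_mul_le_mul_left h3 (by positivity)
    have h5 : (‖x‖ - ‖y‖) ^ 2 ≤ (3 / 4 * d) ^ 2 := by
      apply sq_le_sq'
      · nlinarith
      · nlinarith
    rw [dist_eq_norm, norm_sub_sq_real]
    nlinarith
  have hTv : volume T ≤ ENNReal.ofReal ((5 / 4 * d) ^ 3) := by
    refine (vol_le_diam T).trans ?_
    rw [ENNReal.ofReal_pow (by positivity)]
    gcongr
  have hmain : volume C ≤ ENNReal.ofReal ((5 / 4 * d) ^ 3) + ENNReal.ofReal ((1 - ε) ^ 3) * volume C := by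
    refine (measure_mono hcov).trans ((measure_union_le _ _).trans ?_)
    gcongr
    rw [Measure.addHaar_smul_of_nonneg _ (by linarith)]
    simp
  set c : ℝ := (volume C).toReal with hc
  have hvc : volume C = ENNReal.ofReal c := (ENNReal.ofReal_toReal hfin.ne).symm
  have hc0 : 0 ≤ c := ENNReal.toReal_nonneg
  have h1e : 0 ≤ (1 - ε) ^ 3 := pow_nonneg (by linarith) _
  rw [hvc, ← ENNReal.ofReal_mul h1e, ← ENNReal.ofReal_add (by positivity) (by positivity),
    ENNReal.ofReal_le_ofReal_iff (by positivity)] at hmain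
  rw [hvc]
  apply ENNReal.ofReal_le_ofReal
  -- c * (1-(1-ε)^3) ≤ (5/4 d)^3
  have h6 : c * (3 * ε * (125 / 144)) ≤ (5 / 4 * d) ^ 3 := by
    have : 3 * ε * (125 / 144) ≤ 1 - (1 - ε) ^ 3 := by nlinarith [pow_pos hε0 3]
    nlinarith
  have h7 : (5 / 4 * d) ^ 3 = r * d ^ 2 * (3 * ε * (125 / 144)) := by
    have : r * d ^ 2 * (3 * ε * (125 / 144)) = (ε * r) * d ^ 2 * (3 * (125 / 144)) := by ring
    rw [this, hεr]; ring
  rw [h7] at h6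
  exact le_of_mul_le_mul_right h6 (by positivity)

lemma nu_le (r : ℝ) (hr : 0 < r) :
    Measure.map (prj r) ((volume : Measure E3).restrict {x : E3 | x ≠ 0 ∧ ‖x‖ ≤ r}) ≤ ENNReal.ofReal r • μH[2] := by
  set ν := Measure.map (prj r) ((volume : Measure E3).restrict {x : E3 | x ≠ 0 ∧ ‖x‖ ≤ r}) with hν
  have hr0 : ENNReal.ofReal r ≠ 0 := by simpa using hr
  suffices h : (ENNReal.ofReal r)⁻¹ • ν ≤ μH[2] by
    have h2 : ENNReal.ofReal r • ((ENNReal.ofReal r)⁻¹ • ν) ≤ ENNReal.ofReal r • μH[2] := by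
      gcongr
    rwa [smul_smul, ENNReal.mul_inv_cancel hr0 ENNReal.ofReal_ne_top, one_smul] at h2
  apply Measure.le_hausdorffMeasure 2 _ (ENNReal.ofReal (r / 20)) (by simpa using hr)
  intro s hs
  rw [Measure.smul_apply, smul_eq_mul, ENNReal.inv_mul_le_iff hr0 ENNReal.ofReal_ne_top]
  have hsfin : Metric.ediam s ≠ ⊤ := ne_top_of_le_ne_top ENNReal.ofReal_ne_top hs
  set d0 : ℝ := (Metric.ediam s).toReal with hd0
  have hds : Metric.ediam s = ENNReal.ofReal d0 := (ENNReal.ofReal_toReal hsfin).symm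
  have hd00 : 0 ≤ d0 := ENNReal.toReal_nonneg
  have hd0r : d0 ≤ r / 20 := ENNReal.toReal_le_of_le_ofReal (by positivity) hs
  have key : ∀ d : ℝ, d0 < d → d ≤ r / 10 → ν s ≤ ENNReal.ofReal (r * d ^ 2) := by
    intro d hd hdr
    refine (measure_mono subset_closure).trans ?_
    rw [hν, Measure.map_apply (prj_meas r) isClosed_closure.measurableSet,
      Measure.restrict_apply ((prj_meas r) isClosed_closure.measurableSet), Set.inter_comm]
    apply cone_bound r hr _ d (by linarith) hdr
    intro x hx y hy
    have := Metric.edist_le_ediam_of_mem hx hy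
    rw [Metric.ediam_closure, hds, edist_dist, ENNReal.ofReal_le_ofReal_iff hd00] at this
    linarith
  have hlim : Filter.Tendsto (fun d : ℝ => ENNReal.ofReal (r * d ^ 2)) (nhdsWithin d0 (Set.Ioi d0)) (nhds (ENNReal.ofReal (r * d0 ^ 2))) := by
    have : Continuous (fun d : ℝ => ENNReal.ofReal (r * d ^ 2)) := ENNReal.continuous_ofReal.comp (by fun_prop)
    exact (this.tendsto d0).mono_left nhdsWithin_le_nhds
  have hfinal : ν s ≤ ENNReal.ofReal (r * d0 ^ 2) := by
    apply ge_of_tendsto hlim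
    have : Set.Ioc d0 (r/10) ∈ nhdsWithin d0 (Set.Ioi d0) := Ioc_mem_nhdsGT (by linarith)
    filter_upwards [this] with d hd
    exact key d hd.1 hd.2
  refine hfinal.trans (le_of_eq ?_)
  rw [hds, ENNReal.ofReal_mul hr.le, ENNReal.ofReal_pow hd00]
  norm_num

lemma prj_int_le (r : ℝ) (hr : 0 < r) (F : E3 → ℝ) (hF : Continuous F) (hF0 : ∀ x, 0 ≤ F x) :
    ∫ x in Metric.ball 0 r, F (prj r x) ≤ r * ∫ x in Metric.sphere (0 : E3) r, F x ∂μH[2] := by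
  have hmS : MeasurableSet {x : E3 | x ≠ 0 ∧ ‖x‖ ≤ r} :=
    (measurableSet_singleton (0:E3)).compl.inter (measurableSet_le measurable_norm measurable_const)
  have e1 : (volume : Measure E3).restrict (Metric.ball 0 r) = volume.restrict {x : E3 | x ≠ 0 ∧ ‖x‖ ≤ r} := by
    apply Measure.restrict_congr_set
    have h1 := Measure.addHaar_sphere (volume : Measure E3) 0 r
    have h2 : (volume : Measure E3) {0} = 0 := measure_singleton 0
    filter_upwards [measure_eq_zero_iff_ae_notMem.1 h1, measure_eq_zero_iff_ae_notMem.1 h2] with x hx hx0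
    apply propext
    change x ∈ Metric.ball 0 r ↔ (x ≠ 0 ∧ ‖x‖ ≤ r)
    simp only [mem_sphere_zero_iff_norm, Set.mem_singleton_iff, mem_ball_zero_iff] at *
    exact ⟨fun h => ⟨hx0, h.le⟩, fun h => lt_of_le_of_ne h.2 hx⟩
  rw [e1, ← integral_map (prj_meas r).aemeasurable hF.aestronglyMeasurable]
  set ν := Measure.map (prj r) ((volume : Measure E3).restrict {x : E3 | x ≠ 0 ∧ ‖x‖ ≤ r}) with hν
  have hνS : ν = ν.restrict (Metric.sphere 0 r) := by
    symm
    apply Measure.restrict_eq_self_of_ae_mem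
    rw [hν]
    refine (ae_map_iff (p := fun x => x ∈ Metric.sphere (0:E3) r) (prj_meas r).aemeasurable isClosed_sphere.measurableSet).2 ?_
    filter_upwards [ae_restrict_mem hmS] with x hx
    have : ‖x‖ ≠ 0 := norm_ne_zero_iff.2 hx.1
    simp [prj, norm_smul, this, abs_of_pos hr]
  have hle : ν ≤ ENNReal.ofReal r • (μH[2] : Measure E3).restrict (Metric.sphere 0 r) := by
    rw [hνS, ← Measure.restrict_smul]
    exact Measure.restrict_mono le_rfl (nu_le r hr)
  have hint : Integrable F ((μH[2] : Measure E3).restrict (Metric.sphere 0 r)) :=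
    hF.continuousOn.integrableOn_of_subset_isCompact (isCompact_sphere 0 r) isClosed_sphere.measurableSet le_rfl (sphere_fin r).ne
  calc ∫ x, F x ∂ν ≤ ∫ x, F x ∂(ENNReal.ofReal r • (μH[2] : Measure E3).restrict (Metric.sphere 0 r)) := by
        apply integral_mono_measure hle
        · exact Filter.Eventually.of_forall hF0
        · exact hint.smul_measure ENNReal.ofReal_ne_top
    _ = _ := by
        rw [integral_smul_measure, ENNReal.toReal_ofReal hr.le, smul_eq_mul]

lemma lap_nonneg (w : E3 → E3) (hw : ContDiff ℝ 3 w) (V : Set E3) (hV : IsOpen V)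
    (h : ∀ x ∈ V,
      (∀ u w' : E3, ⟪fderiv ℝ w x u, w'⟫ = ⟪fderiv ℝ w x w', u⟫) ∧
      LinearMap.trace ℝ E3 (fderiv ℝ w x).toLinearMap = 0) (x : E3) (hx : x ∈ V) :
    0 ≤ ∑ i : Fin 3, fderiv ℝ (fun y => 2 * ⟪w y, fderiv ℝ w y (EuclideanSpace.basisFun (Fin 3) ℝ i)⟫) x
      (EuclideanSpace.basisFun (Fin 3) ℝ i) := by
  set b := EuclideanSpace.basisFun (Fin 3) ℝ with hb
  have hw1 : Differentiable ℝ w := hw.differentiable (by norm_num)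
  have hdw : ContDiff ℝ 2 (fderiv ℝ w) := hw.fderiv_right (by norm_num)
  have hd1 : Differentiable ℝ (fderiv ℝ w) := hdw.differentiable (by norm_num)
  set D2 := fderiv ℝ (fderiv ℝ w) x with hD2
  have hap : ∀ u : E3, HasFDerivAt (fun y => fderiv ℝ w y u) (D2.flip u) x := by
    intro u
    have := (hd1 x).hasFDerivAt.clm_apply (hasFDerivAt_const u x)
    refine this.congr_fderiv ?_
    ext a
    simp [hD2]
  have hin : ∀ u u' : E3, HasFDerivAt (fun y => ⟪fderiv ℝ w y u, u'⟫) ((innerSL ℝ u').comp (D2.flip u)) x := by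
    intro u u'
    have := (innerSL ℝ u').hasFDerivAt.comp x (hap u)
    refine this.congr_of_eventuallyEq (Filter.Eventually.of_forall fun y => ?_)
    simp [real_inner_comm]
  have hsym : ∀ a u u' : E3, ⟪D2 a u, u'⟫ = ⟪D2 a u', u⟫ := by
    intro a u u'
    have he : (fun y => ⟪fderiv ℝ w y u, u'⟫) =ᶠ[nhds x] (fun y => ⟪fderiv ℝ w y u', u⟫) := by
      filter_upwards [hV.mem_nhds hx] with y hy
      exact (h y hy).1 u u'
    have := ((hin u u').congr_of_eventuallyEq he.symm).unique (hin u' u)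
    have := DFunLike.congr_fun this a
    simpa [real_inner_comm] using this
  have hsnd : ∀ a u : E3, D2 a u = D2 u a := by
    have : IsSymmSndFDerivAt ℝ w x := hw.contDiffAt.isSymmSndFDerivAt (by simp; norm_num)
    intro a u
    exact this a u
  have htr : ∀ a : E3, ∑ i, ⟪D2 a (b i), b i⟫ = 0 := by
    intro a
    have h1 : HasFDerivAt (fun y => ∑ i, ⟪fderiv ℝ w y (b i), b i⟫) (∑ i, (innerSL ℝ (b i)).comp (D2.flip (b i))) x :=
      HasFDerivAt.fun_sum fun i _ => hin (b i) (b i)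
    have he : (fun y => ∑ i, ⟪fderiv ℝ w y (b i), b i⟫) =ᶠ[nhds x] (fun y => (0:ℝ)) := by
      filter_upwards [hV.mem_nhds hx] with y hy
      have := (h y hy).2
      rw [LinearMap.trace_eq_sum_inner _ b] at this
      rw [← this]
      exact Finset.sum_congr rfl fun i _ => by rw [real_inner_comm]; rfl
    have := (h1.congr_of_eventuallyEq he.symm).unique (hasFDerivAt_const (0:ℝ) x)
    have := DFunLike.congr_fun this a
    simpa [real_inner_comm] using this
  have hlap : ∀ u : E3, ∑ i, ⟪D2 (b i) (b i), u⟫ = 0 := by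
    intro u
    rw [← htr u]
    refine Finset.sum_congr rfl fun i _ => ?_
    rw [hsym, hsnd]
  have hterm : ∀ i, fderiv ℝ (fun y => 2 * ⟪w y, fderiv ℝ w y (b i)⟫) x (b i)
      = 2 * ‖fderiv ℝ w x (b i)‖ ^ 2 + 2 * ⟪D2 (b i) (b i), w x⟫ := by
    intro i
    have h1 := ((hw1 x).hasFDerivAt.inner ℝ (hap (b i))).const_mul 2
    rw [h1.fderiv]
    simp [real_inner_comm]
    ring
  rw [Finset.sum_congr rfl fun i _ => hterm i, Finset.sum_add_distrib, ← Finset.mul_sum (f := fun i => ⟪D2 (b i) (b i), w x⟫), hlap]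
  simp only [mul_zero, add_zero]
  positivity

/-- Lipschitz radial weight -/
def psi (r : ℝ) (x : E3) : ℝ := (r ^ 2 - (min ‖x‖ r) ^ 2) / 2

lemma psi_lip (r : ℝ) (hr : 0 < r) : LipschitzWith ⟨r, hr.le⟩ (psi r) := by
  apply LipschitzWith.of_dist_le_mul
  intro x y
  have h1 : |min ‖x‖ r - min ‖y‖ r| ≤ dist x y := by
    have := abs_min_sub_min_le_max ‖x‖ r ‖y‖ r
    rw [sub_self, abs_zero, max_eq_left (abs_nonneg _)] at this
    rw [dist_eq_norm]
    exact this.trans (abs_norm_sub_norm_le x y)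
  have hx0 : 0 ≤ min ‖x‖ r := le_min (norm_nonneg _) hr.le
  have hy0 : 0 ≤ min ‖y‖ r := le_min (norm_nonneg _) hr.le
  have hx1 : min ‖x‖ r ≤ r := min_le_right _ _
  have hy1 : min ‖y‖ r ≤ r := min_le_right _ _
  have e : psi r x - psi r y = -((min ‖x‖ r - min ‖y‖ r) * ((min ‖x‖ r + min ‖y‖ r) / 2)) := by
    unfold psi; ring
  rw [Real.dist_eq, e, abs_neg, abs_mul, mul_comm]
  have h2 : |(min ‖x‖ r + min ‖y‖ r) / 2| ≤ r := by rw [abs_of_nonneg (by positivity)]; linarith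
  exact mul_le_mul h2 h1 (abs_nonneg _) hr.le

lemma psi_nonneg (r : ℝ) (hr : 0 < r) (x : E3) : 0 ≤ psi r x := by
  have hx0 : 0 ≤ min ‖x‖ r := le_min (norm_nonneg _) hr.le
  have hx1 : min ‖x‖ r ≤ r := min_le_right _ _
  unfold psi
  nlinarith

lemma psi_out (r : ℝ) (x : E3) (hx : r ≤ ‖x‖) : psi r x = 0 := by
  simp [psi, min_eq_right hx]

lemma psi_deriv_in (r : ℝ) (x : E3) (hx : ‖x‖ < r) (a : E3) : lineDeriv ℝ (psi r) x a = - ⟪x, a⟫ := by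
  have h1 : HasFDerivAt (fun y : E3 => (r ^ 2 - ‖y‖ ^ 2) / 2) (-(innerSL ℝ x)) x := by
    have h2 := ((hasStrictFDerivAt_norm_sq x).hasFDerivAt.const_sub (r ^ 2)).mul_const (1 / 2 : ℝ)
    have h3 : HasFDerivAt (fun y : E3 => (r ^ 2 - ‖y‖ ^ 2) * (1 / 2)) (-(innerSL ℝ x)) x := by
      refine h2.congr_fderiv ?_
      ext a
      simp
    refine h3.congr_of_eventuallyEq (Filter.Eventually.of_forall fun y => ?_)
    simp only
    ring
  have he : psi r =ᶠ[nhds x] (fun y : E3 => (r ^ 2 - ‖y‖ ^ 2) / 2) := by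
    have : Metric.ball (0:E3) r ∈ nhds x := isOpen_ball.mem_nhds (by simpa using hx)
    filter_upwards [this] with y hy
    have : ‖y‖ < r := by simpa using hy
    simp [psi, min_eq_left this.le]
  have := (h1.congr_of_eventuallyEq he).hasLineDerivAt a
  rw [this.lineDeriv]
  simp

lemma psi_deriv_out (r : ℝ) (x : E3) (hx : r < ‖x‖) (a : E3) : lineDeriv ℝ (psi r) x a = 0 := by
  have he : psi r =ᶠ[nhds x] (fun y : E3 => (0:ℝ)) := by
    have : {y : E3 | r < ‖y‖} ∈ nhds x := (isOpen_lt continuous_const continuous_norm).mem_nhds hx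
    filter_upwards [this] with y hy
    exact psi_out r y (le_of_lt hy)
  have := ((hasFDerivAt_const (𝕜 := ℝ) (0:ℝ) x).congr_of_eventuallyEq he).hasLineDerivAt a
  rw [this.lineDeriv]
  simp

lemma rad_nonneg (r : ℝ) (hr : 0 < r) (w : E3 → E3) (hw : ContDiff ℝ 3 w) (hwc : HasCompactSupport w)
    (h : ∀ x ∈ Metric.ball (0:E3) r,
      (∀ u w' : E3, ⟪fderiv ℝ w x u, w'⟫ = ⟪fderiv ℝ w x w', u⟫) ∧
      LinearMap.trace ℝ E3 (fderiv ℝ w x).toLinearMap = 0) :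
    0 ≤ ∫ x in Metric.ball (0:E3) r, fderiv ℝ (fun y => ‖w y‖ ^ 2) x x := by
  set b := EuclideanSpace.basisFun (Fin 3) ℝ with hb
  set P : Fin 3 → E3 → ℝ := fun i y => 2 * ⟪w y, fderiv ℝ w y (b i)⟫ with hP
  have hw1 : Differentiable ℝ w := hw.differentiable (by norm_num)
  have hdw : ContDiff ℝ 2 (fderiv ℝ w) := hw.fderiv_right (by norm_num)
  have hPc : ∀ i, ContDiff ℝ 1 (P i) := by
    intro i
    have h1 : ContDiff ℝ 1 w := hw.of_le (by norm_num)
    have h2 : ContDiff ℝ 1 (fderiv ℝ w) := hdw.of_le (by norm_num)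
    exact contDiff_const.mul (h1.inner ℝ (h2.clm_apply contDiff_const))
  have hPs : ∀ i, HasCompactSupport (P i) := by
    intro i
    refine hwc.mono ?_
    intro y hy
    contrapose! hy
    simp only [Function.mem_support, not_not] at hy
    simp [hP, hy]
  have hparts : ∀ i, ∫ x, lineDeriv ℝ (psi r) x (b i) * P i x = - ∫ x, fderiv ℝ (P i) x (b i) * psi r x := by
    intro i
    obtain ⟨C, hC⟩ := ContDiff.lipschitzWith_of_hasCompactSupport (𝕂 := ℝ) (hPs i) (hPc i) (by norm_num)
    rw [(psi_lip r hr).integral_lineDeriv_mul_eq hC (hPs i), ← integral_neg]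
    congr 1
    funext x
    rw [((hPc i).differentiable (by norm_num) x).lineDeriv_eq_fderiv]
    simp
  have hψc : Continuous (psi r) := (psi_lip r hr).continuous
  have hI2 : ∀ i, Integrable (fun x => fderiv ℝ (P i) x (b i) * psi r x) := by
    intro i
    apply Continuous.integrable_of_hasCompactSupport
    · have := (hPc i).continuous_fderiv (by norm_num)
      fun_prop
    · exact HasCompactSupport.mul_right ((hPs i).fderiv_apply (𝕜 := ℝ) (b i))
  have hae : ∀ i, (fun x => lineDeriv ℝ (psi r) x (b i) * P i x) =ᵐ[volume]
      (Metric.ball (0:E3) r).indicator (fun x => - ⟪x, b i⟫ * P i x) := by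
    intro i
    have h1 := Measure.addHaar_sphere (volume : Measure E3) 0 r
    filter_upwards [measure_eq_zero_iff_ae_notMem.1 h1] with x hx
    simp only [mem_sphere_zero_iff_norm] at hx
    rcases lt_or_gt_of_ne hx with hx | hx
    · rw [Set.indicator_of_mem (by simpa using hx), psi_deriv_in r x hx]
    · rw [Set.indicator_of_notMem (by simpa using hx.le), psi_deriv_out r x hx, zero_mul]
  have hIn : ∀ i, IntegrableOn (fun x => - ⟪x, b i⟫ * P i x) (Metric.ball (0:E3) r) := by
    intro i
    have : Continuous (fun x => - ⟪x, b i⟫ * P i x) := by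
      have := (hPc i).continuous
      fun_prop
    exact (this.continuousOn.integrableOn_compact (isCompact_closedBall 0 r)).mono_set Metric.ball_subset_closedBall
  have hF : ∀ x, fderiv ℝ (fun y => ‖w y‖ ^ 2) x x = - ∑ i, (- ⟪x, b i⟫ * P i x) := by
    intro x
    have h1 := (hw1 x).hasFDerivAt.norm_sq
    rw [h1.fderiv]
    have hx : x = ∑ i, ⟪b i, x⟫ • b i := (b.sum_repr' x).symm
    have h2 : fderiv ℝ w x x = ∑ i, ⟪b i, x⟫ • fderiv ℝ w x (b i) := by
      have h3 := congrArg (fderiv ℝ w x) hx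
      rw [map_sum] at h3
      simpa only [map_smul] using h3
    simp only [_root_.smul_apply, ContinuousLinearMap.comp_apply, innerSL_apply_apply, h2, inner_sum, inner_smul_right, hP]
    rw [← Finset.sum_neg_distrib, Finset.smul_sum]
    refine Finset.sum_congr rfl fun i _ => ?_
    rw [real_inner_comm x (b i)]
    simp
    ring
  simp only [hF]
  rw [integral_neg, integral_finsetSum _ (fun i _ => hIn i)]
  have : ∀ i, ∫ x in Metric.ball (0:E3) r, - ⟪x, b i⟫ * P i x = - ∫ x, fderiv ℝ (P i) x (b i) * psi r x := by
    intro i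
    rw [← hparts i, integral_congr_ae (hae i), integral_indicator measurableSet_ball]
  rw [Finset.sum_congr rfl fun i _ => this i, Finset.sum_neg_distrib, neg_neg,
    ← integral_finsetSum _ (fun i _ => hI2 i)]
  apply integral_nonneg
  intro x
  simp only [Pi.zero_apply]
  rw [← Finset.sum_mul]
  by_cases hx : ‖x‖ < r
  · exact mul_nonneg (lap_nonneg w hw _ isOpen_ball h x (by simpa using hx)) (psi_nonneg r hr x)
  · rw [psi_out r x (not_lt.1 hx), mul_zero]

/-- The Euclidean model of the paper's Lemma 7.3. -/
theorem ball_le_sphere_integral (r : ℝ) (hr : 0 < r) (v : E3 → E3) (U : Set E3)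
    (hU : IsOpen U) (hBU : Metric.closedBall (0 : E3) r ⊆ U)
    (hv : IsHarmonicField U v) :
    (∫ x in Metric.ball (0 : E3) r, ‖v x‖ ^ 2) ≤
      r * ∫ x in Metric.sphere (0 : E3) r, ‖v x‖ ^ 2 ∂μH[2] := by
  obtain ⟨hvs, hvd⟩ := hv
  obtain ⟨δ, hδ, hδU⟩ := (isCompact_closedBall (0:E3) r).exists_cthickening_subset_open hU hBU
  rw [cthickening_closedBall hδ.le hr.le] at hδU
  set χ : ContDiffBump (0:E3) := ⟨r + δ / 3, r + δ / 2, by linarith, by linarith⟩ with hχ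
  set w : E3 → E3 := fun x => χ x • v x with hw
  have hts : tsupport χ ⊆ U := by
    rw [χ.tsupport_eq]
    refine (Metric.closedBall_subset_closedBall ?_).trans hδU
    simp only [hχ]
    linarith
  have hwc : HasCompactSupport w := χ.hasCompactSupport.smul_right
  have hws : ContDiff ℝ 3 w := by
    rw [contDiff_iff_contDiffAt]
    intro x
    by_cases hx : x ∈ tsupport w
    swap
    · exact (contDiffAt_const (c := (0:E3))).congr_of_eventuallyEq (notMem_tsupport_iff_eventuallyEq.1 hx)
    have hxU : x ∈ U := hts (tsupport_smul_subset_left _ _ hx)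
    have h1 : ContDiffAt ℝ 3 v x :=
      (hvs.contDiffAt (hU.mem_nhds hxU)).of_le (WithTop.coe_le_coe.2 (le_top : (3:ℕ∞) ≤ ⊤))
    exact χ.contDiffAt.smul h1
  have heq : ∀ x : E3, ‖x‖ ≤ r → w x = v x := by
    intro x hx
    have : χ x = 1 := χ.one_of_mem_closedBall (by simp [hχ]; linarith)
    simp [hw, this]
  have hh : ∀ x ∈ Metric.ball (0:E3) r,
      (∀ u w' : E3, ⟪fderiv ℝ w x u, w'⟫ = ⟪fderiv ℝ w x w', u⟫) ∧
      LinearMap.trace ℝ E3 (fderiv ℝ w x).toLinearMap = 0 := by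
    intro x hx
    have he : w =ᶠ[nhds x] v := by
      filter_upwards [isOpen_ball.mem_nhds hx] with y hy
      exact heq y (le_of_lt (by simpa using hy))
    rw [he.fderiv_eq]
    exact hvd x (hBU (Metric.ball_subset_closedBall hx))
  set F : E3 → ℝ := fun x => ‖w x‖ ^ 2 with hF
  have hFs : ContDiff ℝ 1 F := (hws.of_le (by norm_num)).norm_sq ℝ
  have e1 : ∫ x in Metric.ball (0 : E3) r, ‖v x‖ ^ 2 = ∫ x in Metric.ball (0 : E3) r, F x := by
    refine setIntegral_congr_fun measurableSet_ball fun x hx => ?_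
    simp only [hF]
    rw [heq x (le_of_lt (by simpa using hx))]
  have e2 : ∫ x in Metric.sphere (0 : E3) r, ‖v x‖ ^ 2 ∂μH[2] = ∫ x in Metric.sphere (0 : E3) r, F x ∂μH[2] := by
    refine setIntegral_congr_fun isClosed_sphere.measurableSet fun x hx => ?_
    simp only [hF]
    rw [heq x (le_of_eq (by simpa using hx))]
  rw [e1, e2]
  refine le_trans ?_ (prj_int_le r hr F hFs.continuous fun x => by positivity)
  have h1 := ball_prj r hr F hFs
  have h2 := rad_nonneg r hr w hws hwc hh
  have c1 : Continuous (fun x => 3 * F x) := continuous_const.mul hFs.continuous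
  have c2 : Continuous (fun x => fderiv ℝ F x x) := by
    have := hFs.continuous_fderiv (by norm_num)
    fun_prop
  rw [integral_add, integral_const_mul, integral_const_mul] at h1
  · change 0 ≤ ∫ x in Metric.ball (0:E3) r, fderiv ℝ F x x at h2
    linarith
  · exact (c1.continuousOn.integrableOn_compact (isCompact_closedBall 0 r)).mono_set Metric.ball_subset_closedBall
  · exact (c2.continuousOn.integrableOn_compact (isCompact_closedBall 0 r)).mono_set Metric.ball_subset_closedBall
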